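/- Fix integers m ≥ 2, s ≥ 4 and d ≥ 2s+2. For every integer r with d+2−s ≤ r ≤ d+s−2 and r+s ≡ d (mod 2), one has σ_{s,r}(X_{m,d}) ≠ ∅. -/

import Mathlib

open scoped LinearAlgebra.Projectivization

noncomputable section

/-- The polynomial ring in `m+1` variables over `K`: homogeneous coordinate ring of `ℙ^m`. -/
abbrev PR (K : Type) [Field K] (m : ℕ) : Type := MvPolynomial (Fin (m+1)) K

/-- The space of degree-`d` forms in `m+1` variables. -/
abbrev Hd (K : Type) [Field K] (m d : ℕ) : Submodule K (PR K m) :=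
  MvPolynomial.homogeneousSubmodule (Fin (m+1)) K d

/-- Projective `m`-space over `K`. -/
abbrev Pm (K : Type) [Field K] (m : ℕ) := ℙ K (Fin (m+1) → K)

/-- The target projective space `ℙ^n`, `n = C(m+d,m) - 1`, of the degree-`d` Veronese
embedding, realized as the projectivization of the dual of the space of degree-`d` forms
(the space of degree-`d` symmetric tensors). -/
abbrev PN (K : Type) [Field K] (m d : ℕ) := ℙ K (Module.Dual K (Hd K m d))

variable {K : Type} [Field K] {m : ℕ}

/-- Hilbert function of `R/I` in degree `t`. -/
def hilbQ (I : Ideal (PR K m)) (t : ℕ) : ℕ :=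
  Module.finrank K ((Hd K m t).map (Ideal.Quotient.mkₐ K I).toLinearMap)

/-- The degree (length) of the projective scheme defined by `I`: the eventual value of the
Hilbert function of `R/I`. -/
def idealDeg (I : Ideal (PR K m)) : ℕ := Filter.limsup (fun t => hilbQ I t) Filter.atTop

/-- `h^1(𝓘_Z(d))` for the zero-dimensional scheme `Z` with (saturated) ideal `I`:
it equals `deg Z - dim (R/I)_d`. -/
def h1I (I : Ideal (PR K m)) (d : ℕ) : ℕ := idealDeg I - hilbQ I d

/-- An ideal is homogeneous. -/
def IsHomogI (I : Ideal (PR K m)) : Prop :=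
  ∀ f ∈ I, ∀ n : ℕ, MvPolynomial.homogeneousComponent n f ∈ I

/-- An ideal is saturated with respect to the irrelevant maximal ideal. -/
def IsSatI (I : Ideal (PR K m)) : Prop :=
  ∀ f : PR K m, (∀ i, MvPolynomial.X i * f ∈ I) → f ∈ I

/-- A closed subscheme of `ℙ^m`, given by its saturated homogeneous ideal. -/
structure PSub (K : Type) [Field K] (m : ℕ) where
  I : Ideal (PR K m)
  homog : IsHomogI I
  sat : IsSatI I

/-- A (closed sub)scheme is zero-dimensional iff the Hilbert function of `R/I` is bounded. -/
def IsZeroDimI (I : Ideal (PR K m)) : Prop := ∃ C, ∀ t, hilbQ I t ≤ C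

/-- A polynomial vanishes at a projective point (every homogeneous component vanishes
at a representative). -/
def vanishesAt (f : PR K m) (a : Pm K m) : Prop :=
  ∀ n : ℕ, MvPolynomial.eval a.rep (MvPolynomial.homogeneousComponent n f) = 0

/-- Zero locus of an ideal in `ℙ^m`. -/
def pzeroLocus (I : Ideal (PR K m)) : Set (Pm K m) := {a | ∀ f ∈ I, vanishesAt f a}

/-- The (saturated) homogeneous ideal of a set of points of `ℙ^m`. -/
def idealOfSet (S : Set (Pm K m)) : Ideal (PR K m) :=
  Ideal.span {f : PR K m | (∃ n, f.IsHomogeneous n) ∧ ∀ a ∈ S, MvPolynomial.eval a.rep f = 0}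

/-- Saturation of a homogeneous ideal: the smallest saturated homogeneous ideal containing it. -/
def satIdeal (J : Ideal (PR K m)) : Ideal (PR K m) := sInf {J' | J ≤ J' ∧ IsHomogI J' ∧ IsSatI J'}

/-- The scheme defined by the (saturated) ideal `I` is reduced. -/
def IsReducedI (I : Ideal (PR K m)) : Prop := I = idealOfSet (pzeroLocus I)

/-- Connected component of a zero-dimensional scheme at a point `a`: the largest subscheme
supported at `a`, i.e. the `a`-primary component. -/
def componentAt (I : Ideal (PR K m)) (a : Pm K m) : Ideal (PR K m) :=
  sInf {J | I ≤ J ∧ IsHomogI J ∧ IsSatI J ∧ pzeroLocus J ⊆ {a}}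

/-- Residual scheme of `Z` with respect to the hypersurface `f = 0`: the colon ideal `(I_Z : f)`. -/
def resIdeal (I : Ideal (PR K m)) (f : PR K m) : Ideal (PR K m) :=
  Submodule.colon I (Ideal.span {f})

/-- Degree of the scheme-theoretic intersection of the subschemes defined by `I` and `J`. -/
def interDeg (I J : Ideal (PR K m)) : ℕ := idealDeg (I ⊔ J)

/-- The degree-`d` Veronese image of a vector `v`: the evaluation-at-`v` functional on
degree-`d` forms. -/
def nu (d : ℕ) (v : Fin (m+1) → K) : Module.Dual K (Hd K m d) :=
  (MvPolynomial.aeval v).toLinearMap ∘ₗ (Hd K m d).subtype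

/-- The linear span of the Veronese image `ν_d(S)` of a set `S` of points of `ℙ^m`. -/
def dualSpan (d : ℕ) (S : Set (Pm K m)) : Submodule K (Module.Dual K (Hd K m d)) :=
  Submodule.span K ((fun a => nu d a.rep) '' S)

/-- The linear span `⟨ν_d(Z)⟩` of the Veronese image of the subscheme with ideal `I`:
the annihilator of the degree-`d` part of `I`. -/
def schemeSpanSub (I : Ideal (PR K m)) (d : ℕ) : Submodule K (Module.Dual K (Hd K m d)) where
  carrier := {φ | ∀ f : Hd K m d, (f : PR K m) ∈ I → φ f = 0}
  add_mem' := by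
    intro a b ha hb f hf
    simp [LinearMap.add_apply, ha f hf, hb f hf]
  zero_mem' := by intro f hf; simp
  smul_mem' := by
    intro c a ha f hf
    simp [LinearMap.smul_apply, ha f hf]

/-- `P ∈ ⟨ν_d(Z)⟩`, for `Z` the subscheme with ideal `I`. -/
def inSpanI (I : Ideal (PR K m)) (d : ℕ) (P : PN K m d) : Prop := P.rep ∈ schemeSpanSub I d

/-- `P ∈ ⟨ν_d(S)⟩` for a set `S` of points of `ℙ^m`. -/
def inSpanSet (d : ℕ) (S : Set (Pm K m)) (P : PN K m d) : Prop := P.rep ∈ dualSpan d S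

/-- `L` is a linear subspace of `ℙ^m`. -/
def IsLinearSub (L : Set (Pm K m)) : Prop :=
  ∃ W : Submodule K (Fin (m+1) → K), L = {a | a.submodule ≤ W}

/-- `L` is a line of `ℙ^m`. -/
def IsLine (L : Set (Pm K m)) : Prop :=
  ∃ W : Submodule K (Fin (m+1) → K), Module.finrank K W = 2 ∧ L = {a | a.submodule ≤ W}

/-- `L` is a plane of `ℙ^m`. -/
def IsPlane (L : Set (Pm K m)) : Prop :=
  ∃ W : Submodule K (Fin (m+1) → K), Module.finrank K W = 3 ∧ L = {a | a.submodule ≤ W}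

/-- `J` is the (saturated homogeneous) ideal of a conic of `ℙ^m`: a degree-2 curve contained
in a plane (possibly reducible). -/
def IsConic (J : Ideal (PR K m)) : Prop :=
  ∃ (W : Submodule K (Fin (m+1) → K)) (q : PR K m),
    Module.finrank K W = 3 ∧ q.IsHomogeneous 2 ∧
    q ∉ idealOfSet {a : Pm K m | a.submodule ≤ W} ∧
    J = satIdeal (idealOfSet {a : Pm K m | a.submodule ≤ W} ⊔ Ideal.span {q})

/-- The algebra of polynomial functions on a `K`-vector space. -/
def polyFunctions (K V : Type) [Field K] [AddCommGroup V] [Module K V] : Subalgebra K (V → K) :=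
  Algebra.adjoin K {g : V → K | ∃ φ : V →ₗ[K] K, g = ⇑φ}

/-- Zariski closure of a subset of a projective space. -/
def zClosure {V : Type} [AddCommGroup V] [Module K V] (T : Set (ℙ K V)) : Set (ℙ K V) :=
  {P | ∀ F ∈ polyFunctions K V, (∀ Q ∈ T, ∀ c : K, F (c • Q.rep) = 0) →
    ∀ c : K, F (c • P.rep) = 0}

/-- The Veronese variety `X_{m,d} = ν_d(ℙ^m)` as a subset of `PN K m d`. -/
def XSet (K : Type) [Field K] (m d : ℕ) : Set (PN K m d) :=
  {Q | ∃ a : Pm K m, Q.submodule = Submodule.span K {nu d a.rep}}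

/-- The image `ν_d(S)` of a set of points of `ℙ^m`, as a subset of `PN K m d`. -/
def nuSet (d : ℕ) (S : Set (Pm K m)) : Set (PN K m d) :=
  {Q | ∃ a ∈ S, Q.submodule = Submodule.span K {nu d a.rep}}

/-- The rank of a point `P` of `PN` with respect to a subset `Y ⊆ PN`. -/
def rankWrt {m d : ℕ} (Y : Set (PN K m d)) (P : PN K m d) : ℕ :=
  sInf {r | ∃ S : Finset (PN K m d), ↑S ⊆ Y ∧ S.card = r ∧
    P.rep ∈ Submodule.span K (Projectivization.rep '' (S : Set (PN K m d)))}

/-- The `s`-th secant variety of `Y ⊆ PN`: the Zariski closure of the union of the spans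
of `s` points of `Y`. -/
def secantWrt {m d : ℕ} (Y : Set (PN K m d)) (s : ℕ) : Set (PN K m d) :=
  zClosure {Q | ∃ S : Finset (PN K m d), ↑S ⊆ Y ∧ S.card ≤ s ∧
    Q.rep ∈ Submodule.span K (Projectivization.rep '' (S : Set (PN K m d)))}

/-- The border rank of `P` with respect to `Y ⊆ PN`. -/
def brankWrt {m d : ℕ} (Y : Set (PN K m d)) (P : PN K m d) : ℕ :=
  sInf {s | 0 < s ∧ P ∈ secantWrt Y s}

/-- Symmetric rank. -/
def srank {m : ℕ} (d : ℕ) (P : PN K m d) : ℕ := rankWrt (XSet K m d) P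

/-- Border rank. -/
def brank {m : ℕ} (d : ℕ) (P : PN K m d) : ℕ := brankWrt (XSet K m d) P

/-- Cactus rank: minimal degree of a zero-dimensional closed subscheme `E ⊂ ℙ^m` with
`P ∈ ⟨ν_d(E)⟩`. -/
def crank {m : ℕ} (d : ℕ) (P : PN K m d) : ℕ :=
  sInf {c | ∃ Z : PSub K m, IsZeroDimI Z.I ∧ idealDeg Z.I = c ∧ inSpanI Z.I d P}

/-- `σ_{s,r}(X_{m,d})`. -/
def sigmaSet (K : Type) [Field K] (m d s r : ℕ) : Set (PN K m d) :=
  {P | brank d P = s ∧ srank d P = r}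

/-- A property `Φ` holds for a general `k`-tuple of points of the linear subspace of `ℙ^m`
determined by `W`. -/
def GenerallyOn (W : Submodule K (Fin (m+1) → K)) (k : ℕ)
    (Φ : (Fin k → Pm K m) → Prop) : Prop :=
  ∃ w : Fin 3 → W, Submodule.span K (Set.range fun j => (w j : Fin (m+1) → K)) = W ∧
    ∃ F : MvPolynomial (Fin k × Fin 3) K, F ≠ 0 ∧
      ∀ c : Fin k → Fin 3 → K,
        MvPolynomial.eval (fun p => c p.1 p.2) F ≠ 0 →
        ∀ e : Fin k → Pm K m,
          (∀ i, (e i).submodule = Submodule.span K {∑ j, c i j • (w j : Fin (m+1) → K)}) → Φ e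

end

/-!
Put `k = (r + s - d - 2) / 2` and `b = s - k - 1`, and let `ψ` be the sum of a functional `J_b` in
the span of the length-`b + 1` scheme at a point of a line `L`, outside the span of every smaller
scheme at that point, and of `k` points of `ν_d(M)`, for a second line `M` through another point
of `L`.

Upper bounds: if `t` parametrizes `L`, then `ν_d(t) = ∑ t ^ l • J_l`, and summing this over the
`N`-th roots of unity with suitable weights isolates the terms with `l ≡ b` modulo `N`. For
`N = d + 1 - b` only `J_b` is left, so `ψ` has rank at most `d + 1 - b + k = r`. For `N = b + 1`,
the same sum with `t` rescaled is a family of points of rank at most `b + 1` with limit `J_b`, so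
`ψ` has border rank at most `b + 1 + k = s`.

Lower bound on the rank: project to the plane of `L` and `M`, and let `c` be the difference of the
weights in a decomposition of `ψ` and of the `k` points, so that `∑ c(Q) ν_d(Q) = J_b`. If all
points of `c` lie on `L`, they are at least `d + 1 - b` and disjoint from the `k` points.
Otherwise the residual of `c` with respect to `L` is a linear relation in degree `d - 1`, hence
involves more than `d` points; if there were fewer than `r` points in the decomposition, these
would be at most `2 * d - 1`, thus on a line `R`. The residual of `c` with respect to `R` is then
supported on `L`; it computes a combination of `J_b` and `J_(b-1)` in degree `d - 1`, which takes at
least `d - b` points: too many.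

Lower bound on the border rank: some catalecticant minor of size `s` does not vanish at `ψ`.
-/

noncomputable section

section Points

open MvPolynomial

variable {K σ : Type*} [Field K] [Fintype σ]

/-- The linear form `∑ aᵢ Xᵢ` with coefficient vector `a`. -/
def linearForm (a : σ → K) : MvPolynomial σ K := ∑ i, C (a i) * X i

lemma eval_linearForm (a v : σ → K) : eval v (linearForm a) = a ⬝ᵥ v := by
  simp [linearForm, dotProduct]

lemma isHomogeneous_linearForm (a : σ → K) : (linearForm a).IsHomogeneous 1 :=
  IsHomogeneous.sum _ _ _ fun i _ => isHomogeneous_C_mul_X (a i) i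

lemma exists_dotProduct_rep_ne_zero (Q : ℙ K (σ → K)) : ∃ a : σ → K, a ⬝ᵥ Q.rep ≠ 0 := by
  by_contra! h
  exact Q.rep_nonzero (dotProduct_eq_zero _ fun a => by rw [dotProduct_comm, h])

lemma exists_dotProduct_rep_eq_zero_and_ne_zero {Q Q' : ℙ K (σ → K)} (h : Q' ≠ Q) :
    ∃ a : σ → K, a ⬝ᵥ Q'.rep = 0 ∧ a ⬝ᵥ Q.rep ≠ 0 := by
  classical
  have hQ : Q.rep ∉ K ∙ Q'.rep := by
    rw [Submodule.mem_span_singleton]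
    rintro ⟨x, hx⟩
    refine h.symm ?_
    rw [← Q.mk_rep, ← Q'.mk_rep, Projectivization.mk_eq_mk_iff']
    exact ⟨x, hx⟩
  obtain ⟨φ, hφ, hker⟩ := Submodule.exists_le_ker_of_notMem hQ
  obtain ⟨a, rfl⟩ := (dotProductEquiv K σ).surjective φ
  exact ⟨a, hker (Submodule.mem_span_singleton_self _), hφ⟩

lemma exists_ne_zero_dotProduct_eq_zero_pair (hσ : 2 < Fintype.card σ) (v w : σ → K) :
    ∃ a : σ → K, a ≠ 0 ∧ a ⬝ᵥ v = 0 ∧ a ⬝ᵥ w = 0 := by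
  have hker : LinearMap.ker (Matrix.of ![v, w]).mulVecLin ≠ ⊥ :=
    LinearMap.ker_ne_bot_of_finrank_lt (by simpa using hσ)
  obtain ⟨a, ha, ha0⟩ := Submodule.exists_mem_ne_zero_of_ne_bot hker
  have hvw := LinearMap.mem_ker.mp ha
  exact ⟨a, ha0, by simpa [Matrix.mulVec, dotProduct_comm] using congrFun hvw 0,
    by simpa [Matrix.mulVec, dotProduct_comm] using congrFun hvw 1⟩

end Points

section PointSum

open MvPolynomial

variable {K σ : Type*} [Field K]

lemma exists_isHomogeneous_eval_ne_zero [Finite σ] {Q : ℙ K (σ → K)}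
    {D : Finset (ℙ K (σ → K))} {n : ℕ} (hQ : Q ∉ D) (hD : D.card ≤ n) :
    ∃ g : MvPolynomial σ K, g.IsHomogeneous n ∧ eval Q.rep g ≠ 0 ∧
      ∀ Q' ∈ D, eval Q'.rep g = 0 := by
  have := Fintype.ofFinite σ
  have hsep : ∀ Q', ∃ a : σ → K, (Q' ≠ Q → a ⬝ᵥ Q'.rep = 0) ∧ a ⬝ᵥ Q.rep ≠ 0 := fun Q' => by
    by_cases h : Q' = Q
    · obtain ⟨a, ha⟩ := exists_dotProduct_rep_ne_zero Q
      exact ⟨a, absurd h, ha⟩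
    · obtain ⟨a, ha', ha⟩ := exists_dotProduct_rep_eq_zero_and_ne_zero h
      exact ⟨a, fun _ => ha', ha⟩
  choose a ha' ha using hsep
  refine ⟨(∏ Q' ∈ D, linearForm (a Q')) * linearForm (a Q) ^ (n - D.card), ?_, ?_, ?_⟩
  · have hprod := IsHomogeneous.prod D _ (fun _ => 1) fun Q' _ => isHomogeneous_linearForm (a Q')
    convert hprod.mul ((isHomogeneous_linearForm (a Q)).pow (n - D.card)) using 1
    simp only [Finset.sum_const, smul_eq_mul]
    omega
  · simp only [map_mul, map_prod, map_pow, eval_linearForm]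
    exact mul_ne_zero (Finset.prod_ne_zero_iff.mpr fun Q' _ => ha Q') (pow_ne_zero _ (ha Q))
  · intro Q' hQ'
    have hne : Q' ≠ Q := fun h => hQ (h ▸ hQ')
    rw [map_mul, map_prod, Finset.prod_eq_zero hQ' (by rw [eval_linearForm, ha' Q' hne]), zero_mul]

/-- The functional `f ↦ ∑ c(Q) f(Q)` attached to a finitely supported weight `c` on the points of
projective space; a form is evaluated at the chosen representative of a point. -/
def pointSum : (ℙ K (σ → K) →₀ K) →ₗ[K] Module.Dual K (MvPolynomial σ K) :=
  Finsupp.linearCombination K fun Q => (aeval Q.rep).toLinearMap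

lemma pointSum_apply (c : ℙ K (σ → K) →₀ K) (f : MvPolynomial σ K) :
    pointSum c f = ∑ Q ∈ c.support, c Q * eval Q.rep f := by
  simp [pointSum, Finsupp.linearCombination_apply, Finsupp.sum, LinearMap.sum_apply,
    aeval_eq_eval]

/-- The weight whose `pointSum` is that of `c` composed with multiplication by `g`: the residual of
`c` with respect to the hypersurface `g = 0`, supported at the points of `c` off it. -/
def residualWeight (g : MvPolynomial σ K) (c : ℙ K (σ → K) →₀ K) : ℙ K (σ → K) →₀ K :=
  (fun Q : ℙ K (σ → K) => eval Q.rep g) • c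

lemma mem_support_residualWeight {g : MvPolynomial σ K} {c : ℙ K (σ → K) →₀ K} {Q : ℙ K (σ → K)} :
    Q ∈ (residualWeight g c).support ↔ eval Q.rep g ≠ 0 ∧ Q ∈ c.support := by
  simp [residualWeight, Finsupp.coe_pointwise_smul]

lemma support_residualWeight_subset (g : MvPolynomial σ K) (c : ℙ K (σ → K) →₀ K) :
    (residualWeight g c).support ⊆ c.support := fun _ h => (mem_support_residualWeight.mp h).2

lemma residualWeight_eq_zero_iff {g : MvPolynomial σ K} {c : ℙ K (σ → K) →₀ K} :
    residualWeight g c = 0 ↔ ∀ Q ∈ c.support, eval Q.rep g = 0 := by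
  simp only [← Finsupp.support_eq_empty, Finset.eq_empty_iff_forall_notMem,
    mem_support_residualWeight]
  exact forall_congr' fun Q => by tauto

lemma pointSum_residualWeight (g f : MvPolynomial σ K) (c : ℙ K (σ → K) →₀ K) :
    pointSum (residualWeight g c) f = pointSum c (g * f) := by
  rw [pointSum_apply, pointSum_apply, Finset.sum_subset (support_residualWeight_subset g c)]
  · refine Finset.sum_congr rfl fun Q _ => ?_
    simp only [residualWeight, Finsupp.coe_pointwise_smul, Pi.smul_apply', smul_eq_mul, map_mul]
    ring
  · intro Q _ hQ
    rw [Finsupp.notMem_support_iff.mp hQ, zero_mul]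

lemma card_support_residualWeight_add_le {g g' : MvPolynomial σ K} {c : ℙ K (σ → K) →₀ K}
    (h : residualWeight g' (residualWeight g c) = 0) :
    (residualWeight g' c).support.card + (residualWeight g c).support.card ≤ c.support.card := by
  classical
  rw [residualWeight_eq_zero_iff] at h
  rw [← Finset.card_union_of_disjoint]
  · exact Finset.card_le_card
      (Finset.union_subset (support_residualWeight_subset g' c) (support_residualWeight_subset g c))
  · exact Finset.disjoint_left.mpr fun Q hQ' hQ => (mem_support_residualWeight.mp hQ').1 (h Q hQ)

lemma eq_zero_of_pointSum_eq_zero [Finite σ] {e : ℕ} {c : ℙ K (σ → K) →₀ K}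
    (hc : ∀ f : MvPolynomial σ K, f.IsHomogeneous e → pointSum c f = 0)
    (hcard : c.support.card ≤ e + 1) : c = 0 := by
  classical
  by_contra hne
  obtain ⟨Q, hQ⟩ := Finsupp.support_nonempty_iff.mpr hne
  obtain ⟨g, hg, hgQ, hg0⟩ := exists_isHomogeneous_eval_ne_zero (n := e)
    (Finset.notMem_erase Q c.support) (by rw [Finset.card_erase_of_mem hQ]; omega)
  refine mul_ne_zero (Finsupp.mem_support_iff.mp hQ) hgQ ?_
  rw [← hc g hg, pointSum_apply, Finset.sum_eq_single_of_mem Q hQ]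
  intro Q' hQ' hne'
  rw [hg0 Q' (Finset.mem_erase.mpr ⟨hne', hQ'⟩), mul_zero]

variable [Fintype σ]

lemma pointSum_residualWeight_linearForm_eq_zero {e : ℕ} {c : ℙ K (σ → K) →₀ K}
    (hc : ∀ f : MvPolynomial σ K, f.IsHomogeneous (e + 1) → pointSum c f = 0) (a : σ → K) :
    ∀ f : MvPolynomial σ K, f.IsHomogeneous e → pointSum (residualWeight (linearForm a) c) f = 0 :=
  fun f hf => by
    rw [pointSum_residualWeight,
      hc _ (by simpa only [add_comm] using (isHomogeneous_linearForm a).mul hf)]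

lemma exists_residualWeight_linearForm_eq_zero (hσ : 2 < Fintype.card σ) {e : ℕ}
    {c : ℙ K (σ → K) →₀ K}
    (hc : ∀ f : MvPolynomial σ K, f.IsHomogeneous e → pointSum c f = 0)
    (hcard : c.support.card ≤ 2 * e + 1) :
    ∃ a : σ → K, a ≠ 0 ∧ residualWeight (linearForm a) c = 0 := by
  have : Nonempty σ := Fintype.card_pos_iff.mp (by omega)
  obtain ⟨a₀, ha₀⟩ := exists_ne (0 : σ → K)
  induction e generalizing c with
  | zero =>
    exact ⟨a₀, ha₀, by simp [eq_zero_of_pointSum_eq_zero hc hcard, residualWeight]⟩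
  | succ e ih =>
    by_cases hone : c.support.card ≤ 1
    · have hc₀ : c = 0 := eq_zero_of_pointSum_eq_zero hc (by omega)
      exact ⟨a₀, ha₀, by simp [hc₀, residualWeight]⟩
    obtain ⟨Q₁, hQ₁, Q₂, hQ₂, hne⟩ := Finset.one_lt_card.mp (not_le.mp hone)
    obtain ⟨a, ha, ha₁, ha₂⟩ := exists_ne_zero_dotProduct_eq_zero_pair hσ Q₁.rep Q₂.rep
    have hcard₁ : (residualWeight (linearForm a) c).support.card + 2 ≤ c.support.card := by
      classical
      have hsub : (residualWeight (linearForm a) c).support ⊆ c.support \ {Q₁, Q₂} := fun Q hQ => by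
        rw [mem_support_residualWeight, eval_linearForm] at hQ
        simp only [Finset.mem_sdiff, Finset.mem_insert, Finset.mem_singleton]
        exact ⟨hQ.2, by rintro (rfl | rfl) <;> simp_all⟩
      have hpair : ({Q₁, Q₂} : Finset _) ⊆ c.support := by
        simp only [Finset.insert_subset_iff, Finset.singleton_subset_iff]
        exact ⟨hQ₁, hQ₂⟩
      have := Finset.card_le_card hsub
      have := Finset.card_sdiff_add_card_eq_card hpair
      rw [Finset.card_pair hne] at this
      omega
    have hres := pointSum_residualWeight_linearForm_eq_zero hc
    obtain ⟨a', ha', hzero⟩ := ih (hres a) (by omega)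
    have hdisj := card_support_residualWeight_add_le hzero
    rcases le_or_gt (residualWeight (linearForm a) c).support.card (e + 1) with h | h
    · exact ⟨a, ha, eq_zero_of_pointSum_eq_zero (hres a) h⟩
    · exact ⟨a', ha', eq_zero_of_pointSum_eq_zero (hres a') (by omega)⟩

end PointSum

section LineRestriction

open MvPolynomial

lemma eval_smul_of_isHomogeneous {R σ : Type*} [CommSemiring R] {f : MvPolynomial σ R} {n : ℕ}
    (hf : f.IsHomogeneous n) (x : R) (v : σ → R) : eval (x • v) f = x ^ n * eval v f := by
  rw [eval_eq, eval_eq, Finset.mul_sum]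
  refine Finset.sum_congr rfl fun s hs => ?_
  simp only [Pi.smul_apply, smul_eq_mul, mul_pow, Finset.prod_mul_distrib,
    Finset.prod_pow_eq_pow_sum, hf.degree_eq_sum_deg_support hs]
  ring

variable {K σ : Type*} [Field K] [DecidableEq σ]

/-- The point with parameter `t` of the affine chart of the line joining two coordinate points:
coordinate `1` at `i₀`, coordinate `t` at `i₁`, and `0` elsewhere. -/
def linePoint {R : Type*} [CommSemiring R] (i₀ i₁ : σ) (t : R) : σ → R :=
  Pi.single i₀ 1 + Pi.single i₁ t

/-- The restriction of a polynomial to the affine chart `linePoint i₀ i₁` of a coordinate line. -/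
def lineRestrict (i₀ i₁ : σ) : MvPolynomial σ K →ₐ[K] Polynomial K :=
  aeval (linePoint i₀ i₁ Polynomial.X)

lemma eval_lineRestrict (i₀ i₁ : σ) (f : MvPolynomial σ K) (t : K) :
    (lineRestrict i₀ i₁ f).eval t = eval (linePoint i₀ i₁ t) f := by
  have hcomp : (Polynomial.aeval t).comp (lineRestrict i₀ i₁) =
      (aeval (linePoint i₀ i₁ t) : MvPolynomial σ K →ₐ[K] K) := by
    ext i
    simp [lineRestrict, linePoint, Pi.single_apply, apply_ite (Polynomial.eval t)]
  simpa [Polynomial.coe_aeval_eq_eval, aeval_eq_eval] using DFunLike.congr_fun hcomp f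

lemma natDegree_lineRestrict_le (i₀ i₁ : σ) {f : MvPolynomial σ K} {d : ℕ}
    (hf : f.IsHomogeneous d) : (lineRestrict i₀ i₁ f).natDegree ≤ d := by
  have hX : ∀ i, (linePoint i₀ i₁ (Polynomial.X : Polynomial K) i).natDegree ≤ 1 := fun i => by
    rw [linePoint, Pi.add_apply, Pi.single_apply, Pi.single_apply]
    split_ifs <;> compute_degree!
  simpa [lineRestrict] using aeval_natDegree_le f hf.totalDegree_le _ hX

lemma lineRestrict_X {i₀ i₁ : σ} (i : σ) :
    lineRestrict i₀ i₁ (X i : MvPolynomial σ K) = linePoint i₀ i₁ Polynomial.X i :=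
  aeval_X _ _

/-- The coordinate point `eᵢ` of projective space. -/
def coordPoint (i : σ) : ℙ K (σ → K) := Projectivization.mk K (Pi.single i 1) (by simp)

lemma exists_rep_coordPoint_eq_smul (i : σ) :
    ∃ u : K, u ≠ 0 ∧ (coordPoint i : ℙ K (σ → K)).rep = u • Pi.single i (1 : K) := by
  obtain ⟨u, hu⟩ := Projectivization.exists_smul_eq_mk_rep K (Pi.single i 1 : σ → K) (by simp)
  exact ⟨u, u.ne_zero, hu.symm⟩

lemma exists_isHomogeneous_lineRestrict_coeff_ne_zero [Finite σ] {i₀ i₁ : σ} (h₀₁ : i₀ ≠ i₁)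
    {D : Finset (ℙ K (σ → K))} {n j : ℕ} (hD : D.card ≤ n) (hj : coordPoint i₀ ∈ D → 1 ≤ j) :
    ∃ f : MvPolynomial σ K, f.IsHomogeneous (n + j) ∧ (∀ Q ∈ D, eval Q.rep f = 0) ∧
      (lineRestrict i₀ i₁ f).coeff j ≠ 0 ∧ ∀ i < j, (lineRestrict i₀ i₁ f).coeff i = 0 := by
  classical
  obtain ⟨u, -, hu⟩ := exists_rep_coordPoint_eq_smul (K := K) i₀
  obtain ⟨g, hg, hg₀, hgD⟩ := exists_isHomogeneous_eval_ne_zero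
    (Finset.notMem_erase (coordPoint i₀) D) ((Finset.card_erase_le).trans hD)
  have hres : lineRestrict i₀ i₁ (g * X i₁ ^ j) = lineRestrict i₀ i₁ g * Polynomial.X ^ j := by
    simp [lineRestrict_X, linePoint, h₀₁]
  refine ⟨g * X i₁ ^ j, hg.mul (isHomogeneous_X_pow i₁ j), fun Q hQ => ?_, ?_, fun i hi => ?_⟩
  · rw [map_mul, map_pow, eval_X]
    by_cases h : Q = coordPoint i₀
    · subst h
      have hj' := hj hQ
      simp [hu, h₀₁.symm, show j ≠ 0 by omega]
    · rw [hgD Q (Finset.mem_erase.mpr ⟨h, hQ⟩), zero_mul]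
  · have hcoeff : (lineRestrict i₀ i₁ g).coeff 0 = eval (Pi.single i₀ 1) g := by
      simp [Polynomial.coeff_zero_eq_eval_zero, eval_lineRestrict, linePoint]
    rw [hu, eval_smul_of_isHomogeneous hg] at hg₀
    rw [hres, Polynomial.coeff_mul_X_pow', if_pos le_rfl, Nat.sub_self, hcoeff]
    exact right_ne_zero_of_mul hg₀
  · rw [hres, Polynomial.coeff_mul_X_pow', if_neg (by omega)]

end LineRestriction

section Plane

open MvPolynomial

variable {K : Type*} [Field K]

lemma le_card_support_add_of_pointSum_eq_jet {σ : Type*} [Finite σ] [DecidableEq σ] {i₀ i₁ : σ}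
    (h₀₁ : i₀ ≠ i₁) {e b : ℕ} (hb : b < e) {x y : K} {c : ℙ K (σ → K) →₀ K}
    (hxy : x ≠ 0 ∨ y ≠ 0 ∧ coordPoint i₀ ∉ c.support)
    (hc : ∀ f : MvPolynomial σ K, f.IsHomogeneous e → pointSum c f =
      x * (lineRestrict i₀ i₁ f).coeff (b + 1) + y * (lineRestrict i₀ i₁ f).coeff b) :
    e ≤ c.support.card + b := by
  by_contra! hlt
  have hsum : ∀ f : MvPolynomial σ K, (∀ Q ∈ c.support, eval Q.rep f = 0) → pointSum c f = 0 :=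
    fun f hf => by
      rw [pointSum_apply]
      exact Finset.sum_eq_zero fun Q hQ => by rw [hf Q hQ, mul_zero]
  by_cases hx : x = 0
  · obtain ⟨hy, h₀⟩ := hxy.resolve_left (not_not.mpr hx)
    obtain ⟨f, hf, hf₀, hfb, -⟩ := exists_isHomogeneous_lineRestrict_coeff_ne_zero h₀₁
      (D := c.support) (n := e - b) (j := b) (by omega) (absurd · h₀)
    rw [Nat.sub_add_cancel hb.le] at hf
    have hcf := hc f hf
    rw [hsum f hf₀, hx, zero_mul, zero_add] at hcf
    exact mul_ne_zero hy hfb hcf.symm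
  · obtain ⟨f, hf, hf₀, hfb, hfb'⟩ := exists_isHomogeneous_lineRestrict_coeff_ne_zero h₀₁
      (D := c.support) (n := e - (b + 1)) (j := b + 1) (by omega) (fun _ => by omega)
    rw [Nat.sub_add_cancel hb] at hf
    have hcf := hc f hf
    rw [hsum f hf₀, hfb' b b.lt_succ_self, mul_zero, add_zero] at hcf
    exact mul_ne_zero hx hfb hcf.symm

lemma lineRestrict_linearForm (a : Fin 3 → K) :
    lineRestrict 0 1 (linearForm a) =
      Polynomial.C (a 0) + Polynomial.C (a 1) * Polynomial.X := by
  simp [linearForm, lineRestrict, linePoint, Fin.sum_univ_three]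

lemma pointSum_residualWeight_linearForm {d b : ℕ} {c : ℙ K (Fin 3 → K) →₀ K}
    (hc : ∀ f : MvPolynomial (Fin 3) K, f.IsHomogeneous (d + 1) →
      pointSum c f = (lineRestrict 0 1 f).coeff (b + 1)) (a : Fin 3 → K)
    (f : MvPolynomial (Fin 3) K) (hf : f.IsHomogeneous d) :
    pointSum (residualWeight (linearForm a) c) f =
      a 0 * (lineRestrict 0 1 f).coeff (b + 1) + a 1 * (lineRestrict 0 1 f).coeff b := by
  rw [pointSum_residualWeight,
    hc _ (by simpa only [add_comm] using (isHomogeneous_linearForm a).mul hf),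
    map_mul, lineRestrict_linearForm, add_mul, mul_assoc, Polynomial.coeff_add,
    Polynomial.coeff_C_mul, Polynomial.coeff_C_mul, Polynomial.coeff_X_mul]

lemma card_support_add_of_residualWeight_eq_zero {σ : Type*} {g : MvPolynomial σ K}
    {c β : ℙ K (σ → K) →₀ K} (hc : residualWeight g c = 0)
    (hβ : ∀ Q ∈ β.support, eval Q.rep g ≠ 0) :
    (c + β).support.card = c.support.card + β.support.card := by
  classical
  have hdisj : Disjoint c.support β.support :=
    Finset.disjoint_left.mpr fun Q hQ hQβ => hβ Q hQβ (residualWeight_eq_zero_iff.mp hc Q hQ)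
  rw [Finsupp.support_add_eq hdisj, Finset.card_union_of_disjoint hdisj]

lemma coeff_ne_zero_of_residualWeight_eq_zero {c : ℙ K (Fin 3 → K) →₀ K} {a : Fin 3 → K}
    (ha : a ≠ 0) (h : residualWeight (linearForm a) c = 0)
    (hc : ∃ Q ∈ c.support, Q.rep 2 ≠ 0) : a 0 ≠ 0 ∨ a 1 ≠ 0 := by
  by_contra! h₀₁
  obtain ⟨Q, hQ, hQ₂⟩ := hc
  have haQ := residualWeight_eq_zero_iff.mp h Q hQ
  rw [eval_linearForm, dotProduct, Fin.sum_univ_three, h₀₁.1, h₀₁.2, zero_mul, zero_mul, zero_add,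
    zero_add, mul_eq_zero, or_iff_left hQ₂] at haQ
  refine ha (funext fun i => ?_)
  fin_cases i
  exacts [h₀₁.1, h₀₁.2, haQ]

lemma le_card_support_residualWeight_add {d b : ℕ} (hbd : b < d) {c : ℙ K (Fin 3 → K) →₀ K}
    (hc : ∀ f : MvPolynomial (Fin 3) K, f.IsHomogeneous (d + 1) →
      pointSum c f = (lineRestrict 0 1 f).coeff (b + 1)) {a : Fin 3 → K}
    (ha : a 0 ≠ 0 ∨ a 1 ≠ 0) : d ≤ (residualWeight (linearForm a) c).support.card + b := by
  obtain ⟨u, -, hu⟩ := exists_rep_coordPoint_eq_smul (K := K) (0 : Fin 3)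
  refine le_card_support_add_of_pointSum_eq_jet (by decide) hbd ?_
    (pointSum_residualWeight_linearForm hc a)
  by_cases h₀ : a 0 = 0
  · refine Or.inr ⟨ha.resolve_left (not_not.mpr h₀), fun hmem => ?_⟩
    exact (mem_support_residualWeight.mp hmem).1 (by simp [eval_linearForm, hu, h₀])
  · exact Or.inl h₀

theorem le_card_support_of_jet_add_pointSum_eq {d b : ℕ} (hb : 1 ≤ b) (hbd : b < d)
    {α β : ℙ K (Fin 3 → K) →₀ K} (hβ : 2 * β.support.card ≤ d)
    (hβ₂ : ∀ Q ∈ β.support, Q.rep 2 ≠ 0)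
    (h : ∀ f : MvPolynomial (Fin 3) K, f.IsHomogeneous d →
      (lineRestrict 0 1 f).coeff b + pointSum β f = pointSum α f) :
    d + 1 + β.support.card ≤ α.support.card + b := by
  classical
  obtain ⟨b, rfl⟩ := Nat.exists_eq_add_of_le' hb
  obtain ⟨d, rfl⟩ := Nat.exists_eq_add_of_le' (hb.trans hbd.le)
  obtain ⟨c, rfl⟩ : ∃ c, α = c + β := ⟨α - β, (sub_add_cancel α β).symm⟩
  have hc : ∀ f : MvPolynomial (Fin 3) K, f.IsHomogeneous (d + 1) →
      pointSum c f = (lineRestrict 0 1 f).coeff (b + 1) := fun f hf => by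
    have hf' := h f hf
    rw [map_add, LinearMap.add_apply] at hf'
    exact (add_right_cancel hf').symm
  let ℓ : MvPolynomial (Fin 3) K := linearForm (Pi.single 2 1)
  have hℓ : ∀ v, eval v ℓ = v 2 := fun v => by simp [ℓ, eval_linearForm]
  by_cases hline : residualWeight ℓ c = 0
  · have hcard := card_support_add_of_residualWeight_eq_zero hline
      fun Q hQ => by rw [hℓ]; exact hβ₂ Q hQ
    have hjet := le_card_support_add_of_pointSum_eq_jet (K := K) (i₀ := (0 : Fin 3)) (i₁ := 1)
      (x := 1) (y := 0) (c := c) (by decide) (Nat.lt_of_succ_lt hbd) (Or.inl one_ne_zero)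
      fun f hf => by rw [hc f hf]; ring
    omega
  · by_contra! hlt
    have hrel : ∀ f : MvPolynomial (Fin 3) K, f.IsHomogeneous d →
        pointSum (residualWeight ℓ c) f = 0 := fun f hf => by
      rw [pointSum_residualWeight_linearForm hc _ f hf]
      simp
    have hmany : d + 1 < (residualWeight ℓ c).support.card :=
      not_le.mp (hline ∘ eq_zero_of_pointSum_eq_zero hrel)
    have hres := Finset.card_le_card (support_residualWeight_subset ℓ c)
    have hsub : c.support.card ≤ (c + β).support.card + β.support.card := by
      conv_lhs => rw [← add_sub_cancel_right c β]
      exact (Finset.card_le_card Finsupp.support_sub).trans (Finset.card_union_le _ _)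
    obtain ⟨a, ha, hzero⟩ := exists_residualWeight_linearForm_eq_zero (by simp) hrel (by omega)
    have ha₀₁ := coeff_ne_zero_of_residualWeight_eq_zero ha hzero (by
      obtain ⟨Q, hQ⟩ := Finsupp.support_nonempty_iff.mpr hline
      exact ⟨Q, hQ, hℓ Q.rep ▸ (mem_support_residualWeight.mp hQ).1⟩)
    have hjet := le_card_support_residualWeight_add (by omega) hc ha₀₁
    have hdisj := card_support_residualWeight_add_le hzero
    omega

end Plane

section WeightsOfVectors

open MvPolynomial

variable {K σ ι : Type*} [Field K] [Fintype ι]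

lemma exists_eq_smul_rep [Nonempty σ] (v : σ → K) :
    ∃ (Q : ℙ K (σ → K)) (x : K), v = x • Q.rep := by
  classical
  by_cases hv : v = 0
  · exact ⟨coordPoint (Classical.arbitrary σ), 0, by rw [hv, zero_smul]⟩
  · obtain ⟨u, hu⟩ := Projectivization.exists_smul_eq_mk_rep K v hv
    exact ⟨Projectivization.mk K v hv, ↑u⁻¹, by rw [← hu, ← Units.smul_def, inv_smul_smul]⟩

lemma pointSum_mapDomain {d : ℕ} (w : ι → K) {v : ι → σ → K} {q : ι → ℙ K (σ → K)} {x : ι → K}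
    (hv : ∀ i, v i = x i • (q i).rep) {f : MvPolynomial σ K} (hf : f.IsHomogeneous d) :
    pointSum ((Finsupp.equivFunOnFinite.symm fun i => w i * x i ^ d).mapDomain q) f =
      ∑ i, w i * eval (v i) f := by
  rw [pointSum, Finsupp.linearCombination_mapDomain, Finsupp.linearCombination_apply,
    Finsupp.sum_fintype _ _ (by simp), LinearMap.sum_apply]
  refine Finset.sum_congr rfl fun i _ => ?_
  simp [hv, eval_smul_of_isHomogeneous hf, aeval_eq_eval, mul_assoc]

lemma exists_pointSum_eq_sum [Nonempty σ] (d : ℕ) (w : ι → K) (v : ι → σ → K) :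
    ∃ c : ℙ K (σ → K) →₀ K, c.support.card ≤ Fintype.card ι ∧
      ∀ f : MvPolynomial σ K, f.IsHomogeneous d → pointSum c f = ∑ i, w i * eval (v i) f := by
  classical
  choose q x hv using fun i => exists_eq_smul_rep (v i)
  exact ⟨_, (Finset.card_le_card Finsupp.mapDomain_support).trans
    (Finset.card_image_le.trans (Finset.card_le_univ _)), fun f => pointSum_mapDomain w hv⟩

lemma exists_pointSum_eq_sum_of_injective (d : ℕ) {w : ι → K} (hw : ∀ i, w i ≠ 0)
    {v : ι → σ → K} (hv : ∀ i, v i ≠ 0)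
    (hinj : Function.Injective fun i => Projectivization.mk K (v i) (hv i)) :
    ∃ c : ℙ K (σ → K) →₀ K, c.support.card = Fintype.card ι ∧
      (∀ Q ∈ c.support, ∃ i, Q = Projectivization.mk K (v i) (hv i)) ∧
      ∀ f : MvPolynomial σ K, f.IsHomogeneous d → pointSum c f = ∑ i, w i * eval (v i) f := by
  classical
  choose u hu using fun i => Projectivization.exists_smul_eq_mk_rep K (v i) (hv i)
  have hv' : ∀ i, v i = (u i)⁻¹.1 • (Projectivization.mk K (v i) (hv i)).rep := fun i => by
    rw [← hu, ← Units.smul_def, inv_smul_smul]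
  refine ⟨_, ?_, fun Q hQ => ?_, fun f => pointSum_mapDomain w hv'⟩
  · rw [Finsupp.mapDomain_support_of_injective hinj, Finset.card_image_of_injective _ hinj,
      Finset.card_eq_iff_eq_univ]
    ext i
    simp [hw]
  · obtain ⟨i, -, rfl⟩ := Finset.mem_image.mp (Finsupp.mapDomain_support hQ)
    exact ⟨i, rfl⟩

end WeightsOfVectors

section Rank

variable {K : Type} [Field K] {m : ℕ}

lemma nu_apply (d : ℕ) (v : Fin (m + 1) → K) (f : Hd K m d) :
    nu d v f = MvPolynomial.eval v (f : PR K m) := rfl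

lemma nu_rep_ne_zero (d : ℕ) (Q : Pm K m) : nu d Q.rep ≠ 0 := fun h => by
  obtain ⟨i, hi⟩ := Function.ne_iff.mp Q.rep_nonzero
  have hX := DFunLike.congr_fun h ⟨_, MvPolynomial.isHomogeneous_X_pow i d⟩
  simp only [nu_apply, map_pow, MvPolynomial.eval_X, LinearMap.zero_apply] at hX
  exact pow_ne_zero d hi hX

/-- The Veronese embedding `ν_d` as a map on points. -/
def veronesePoint (d : ℕ) (Q : Pm K m) : PN K m d := Projectivization.mk K _ (nu_rep_ne_zero d Q)

lemma XSet_eq_range (d : ℕ) : XSet K m d = Set.range (veronesePoint d) := by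
  ext P
  refine exists_congr fun Q => ?_
  rw [← Projectivization.submodule_mk _ (nu_rep_ne_zero d Q),
    Projectivization.submodule_injective.eq_iff, eq_comm]
  rfl

lemma span_rep_image_veronesePoint (d : ℕ) (T : Set (Pm K m)) :
    Submodule.span K (Projectivization.rep '' (veronesePoint d '' T)) = dualSpan d T := by
  rw [dualSpan, Submodule.span_eq_iSup_of_singleton_spans,
    Submodule.span_eq_iSup_of_singleton_spans, iSup_image, iSup_image, iSup_image]
  refine iSup_congr fun Q => iSup_congr fun _ => ?_
  rw [← Projectivization.submodule_eq, veronesePoint, Projectivization.submodule_mk]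

lemma mem_dualSpan_iff {d : ℕ} {T : Set (Pm K m)} {ψ : Module.Dual K (Hd K m d)} :
    ψ ∈ dualSpan d T ↔ ∃ c : Pm K m →₀ K, ↑c.support ⊆ T ∧
      ∀ f : Hd K m d, ψ f = pointSum c (f : PR K m) := by
  rw [dualSpan, Finsupp.mem_span_image_iff_linearCombination]
  refine exists_congr fun c => and_congr Iff.rfl ?_
  rw [eq_comm, LinearMap.ext_iff]
  refine forall_congr' fun f => ?_
  simp [pointSum, Finsupp.linearCombination_apply, Finsupp.sum, LinearMap.sum_apply, nu_apply,
    MvPolynomial.aeval_eq_eval]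

/-- The functionals on degree-`d` forms in the span of the representatives of at most `r` points
of the Veronese variety, i.e. the affine cone of points of symmetric rank at most `r`. -/
def rankLE (d r : ℕ) : Set (Module.Dual K (Hd K m d)) :=
  {ψ | ∃ S : Finset (PN K m d), ↑S ⊆ XSet K m d ∧ S.card ≤ r ∧
    ψ ∈ Submodule.span K (Projectivization.rep '' (S : Set (PN K m d)))}

lemma mem_rankLE_iff {d r : ℕ} {ψ : Module.Dual K (Hd K m d)} :
    ψ ∈ rankLE d r ↔ ∃ c : Pm K m →₀ K, c.support.card ≤ r ∧
      ∀ f : Hd K m d, ψ f = pointSum c (f : PR K m) := by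
  classical
  constructor
  · rintro ⟨S, hSX, hS, hψ⟩
    rw [XSet_eq_range, ← Set.image_univ] at hSX
    obtain ⟨T, -, hinj, rfl⟩ := Finset.exists_subset_injOn_image_eq_of_surjOn Set.univ S hSX
    rw [Finset.card_image_of_injOn hinj] at hS
    rw [Finset.coe_image, span_rep_image_veronesePoint, mem_dualSpan_iff] at hψ
    obtain ⟨c, hc, hψ⟩ := hψ
    exact ⟨c, (Finset.card_le_card hc).trans hS, hψ⟩
  · rintro ⟨c, hc, hψ⟩
    refine ⟨c.support.image (veronesePoint d), ?_, Finset.card_image_le.trans hc, ?_⟩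
    · rw [XSet_eq_range, Finset.coe_image]
      exact Set.image_subset_range _ _
    · rw [Finset.coe_image, span_rep_image_veronesePoint, mem_dualSpan_iff]
      exact ⟨c, subset_rfl, hψ⟩

lemma sum_smul_nu_mem_rankLE {ι : Type*} [Fintype ι] (d : ℕ) (w : ι → K)
    (v : ι → Fin (m + 1) → K) : ∑ i, w i • nu d (v i) ∈ rankLE d (Fintype.card ι) := by
  obtain ⟨c, hc, h⟩ := exists_pointSum_eq_sum d w v
  refine mem_rankLE_iff.mpr ⟨c, hc, fun f => ?_⟩
  simp [h f f.2, LinearMap.sum_apply, nu_apply]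

lemma smul_mem_rankLE {d r : ℕ} {ψ : Module.Dual K (Hd K m d)} (x : K) (h : ψ ∈ rankLE d r) :
    x • ψ ∈ rankLE d r := by
  obtain ⟨S, hSX, hS, hψ⟩ := h
  exact ⟨S, hSX, hS, Submodule.smul_mem _ x hψ⟩

lemma rep_mk_mem_rankLE_iff {d r : ℕ} {ψ : Module.Dual K (Hd K m d)} (hψ : ψ ≠ 0) :
    (Projectivization.mk K ψ hψ).rep ∈ rankLE d r ↔ ψ ∈ rankLE d r := by
  obtain ⟨u, hu⟩ := Projectivization.exists_smul_eq_mk_rep K ψ hψ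
  rw [← hu]
  refine ⟨fun h => ?_, smul_mem_rankLE u.1⟩
  rw [← inv_smul_smul u ψ]
  exact smul_mem_rankLE _ h

lemma srank_mk_eq {d r : ℕ} {ψ : Module.Dual K (Hd K m d)} (hψ : ψ ≠ 0) (h : ψ ∈ rankLE d r)
    (hmin : ∀ t, ψ ∈ rankLE d t → r ≤ t) : srank d (Projectivization.mk K ψ hψ) = r := by
  obtain ⟨S, hSX, hS, hSψ⟩ := (rep_mk_mem_rankLE_iff hψ).mpr h
  refine le_antisymm (le_trans (Nat.sInf_le ⟨S, hSX, rfl, hSψ⟩) hS)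
    (le_csInf ⟨S.card, S, hSX, rfl, hSψ⟩ ?_)
  rintro t ⟨S', hSX', rfl, hSψ'⟩
  exact hmin _ ((rep_mk_mem_rankLE_iff hψ).mp ⟨S', hSX', le_rfl, hSψ'⟩)

end Rank

section Border

variable {K : Type} [Field K] {m : ℕ}

lemma mk_mem_secantWrt_iff {d s : ℕ} {ψ : Module.Dual K (Hd K m d)} (hψ : ψ ≠ 0) :
    Projectivization.mk K ψ hψ ∈ secantWrt (XSet K m d) s ↔
      ∀ F ∈ polyFunctions K (Module.Dual K (Hd K m d)),
        (∀ χ ∈ rankLE d s, χ ≠ 0 → ∀ x : K, F (x • χ) = 0) → ∀ x : K, F (x • ψ) = 0 := by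
  have hmk : ∀ {χ : Module.Dual K (Hd K m d)} (hχ : χ ≠ 0) (F : Module.Dual K (Hd K m d) → K),
      (∀ x : K, F (x • (Projectivization.mk K χ hχ).rep) = 0) ↔ ∀ x : K, F (x • χ) = 0 :=
    fun {χ} hχ F => by
      obtain ⟨u, hu⟩ := Projectivization.exists_smul_eq_mk_rep K χ hχ
      simp only [← hu, Units.smul_def, smul_smul]
      exact (u.mulRight.surjective.forall (p := fun x => F (x • χ) = 0)).symm
  refine forall₂_congr fun F _ => imp_congr ⟨fun h χ hχ hχ₀ => ?_, fun h Q hQ => ?_⟩ (hmk hψ F)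
  · exact (hmk hχ₀ F).mp (h _ ((rep_mk_mem_rankLE_iff hχ₀).mpr hχ))
  · exact h Q.rep hQ Q.rep_nonzero

/-- A curve `γ` in a vector space is polynomial if each of its coordinates `φ ∘ γ` is. -/
def IsPolynomialCurve {V : Type*} [AddCommGroup V] [Module K V] (γ : K → V) : Prop :=
  ∀ φ : Module.Dual K V, ∃ p : Polynomial K, ∀ t, φ (γ t) = p.eval t

lemma isPolynomialCurve_sum_pow_smul {V ι : Type*} [AddCommGroup V] [Module K V] (L : Finset ι)
    (n : ι → ℕ) (x : ι → V) : IsPolynomialCurve fun t : K => ∑ l ∈ L, t ^ n l • x l := fun φ =>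
  ⟨∑ l ∈ L, Polynomial.C (φ (x l)) * Polynomial.X ^ n l, fun t => by
    simp only [map_sum, map_smul, smul_eq_mul, Polynomial.eval_finsetSum, Polynomial.eval_mul,
      Polynomial.eval_C, Polynomial.eval_pow, Polynomial.eval_X, mul_comm]⟩

lemma IsPolynomialCurve.add_const {V : Type*} [AddCommGroup V] [Module K V] {γ : K → V}
    (hγ : IsPolynomialCurve γ) (x : V) : IsPolynomialCurve fun t => γ t + x := fun φ => by
  obtain ⟨p, hp⟩ := hγ φ
  exact ⟨p + Polynomial.C (φ x), fun t => by simp [hp]⟩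

lemma IsPolynomialCurve.const_smul {V : Type*} [AddCommGroup V] [Module K V] {γ : K → V}
    (hγ : IsPolynomialCurve γ) (x : K) : IsPolynomialCurve fun t => x • γ t := fun φ => by
  obtain ⟨p, hp⟩ := hγ φ
  exact ⟨Polynomial.C x * p, fun t => by simp [hp]⟩

lemma IsPolynomialCurve.exists_eval_eq {V : Type} [AddCommGroup V] [Module K V] {γ : K → V}
    (hγ : IsPolynomialCurve γ) {F : V → K} (hF : F ∈ polyFunctions K V) :
    ∃ p : Polynomial K, ∀ t, F (γ t) = p.eval t := by
  induction hF using Algebra.adjoin_induction with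
  | mem F hF => obtain ⟨φ, rfl⟩ := hF; exact hγ φ
  | algebraMap r => exact ⟨Polynomial.C r, fun t => by simp [Pi.algebraMap_apply]⟩
  | add F G _ _ hF hG =>
    obtain ⟨p, hp⟩ := hF
    obtain ⟨q, hq⟩ := hG
    exact ⟨p + q, fun t => by simp [hp, hq]⟩
  | mul F G _ _ hF hG =>
    obtain ⟨p, hp⟩ := hF
    obtain ⟨q, hq⟩ := hG
    exact ⟨p * q, fun t => by simp [hp, hq]⟩

lemma mk_mem_secantWrt_of_isPolynomialCurve [Infinite K] {d s : ℕ}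
    {γ : K → Module.Dual K (Hd K m d)} (hγ : IsPolynomialCurve γ) (h₀ : γ 0 ≠ 0)
    (h : ∀ t ≠ 0, γ t ∈ rankLE d s) :
    Projectivization.mk K (γ 0) h₀ ∈ secantWrt (XSet K m d) s := by
  refine (mk_mem_secantWrt_iff h₀).mpr fun F hF hvan x => ?_
  obtain ⟨φ, hφ⟩ := not_forall.mp (mt (Module.forall_dual_apply_eq_zero_iff K (γ 0)).mp h₀)
  obtain ⟨p, hp⟩ := (hγ.const_smul x).exists_eval_eq hF
  obtain ⟨q, hq⟩ := hγ φ
  have hq₀ : q ≠ 0 := by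
    rintro rfl
    exact hφ (by rw [hq, Polynomial.eval_zero])
  have hprod : p * (q * Polynomial.X) = 0 := Polynomial.funext fun t => by
    rw [Polynomial.eval_mul, Polynomial.eval_mul, Polynomial.eval_X, ← hp, ← hq,
      Polynomial.eval_zero]
    by_cases ht : t = 0
    · rw [ht, mul_zero, mul_zero]
    by_cases hγt : γ t = 0
    · rw [hγt, map_zero, zero_mul, mul_zero]
    · rw [hvan _ (h t ht) hγt, zero_mul]
  rw [hp, (mul_eq_zero.mp hprod).resolve_right (mul_ne_zero hq₀ Polynomial.X_ne_zero),
    Polynomial.eval_zero]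

lemma brank_mk_eq {d s : ℕ} {ψ : Module.Dual K (Hd K m d)} (hψ : ψ ≠ 0) (hs : 0 < s)
    (h : Projectivization.mk K ψ hψ ∈ secantWrt (XSet K m d) s)
    (hmin : ∀ t, Projectivization.mk K ψ hψ ∈ secantWrt (XSet K m d) t → s ≤ t) :
    brank d (Projectivization.mk K ψ hψ) = s :=
  le_antisymm (Nat.sInf_le ⟨hs, h⟩) (le_csInf ⟨s, hs, h⟩ fun t ht => hmin t ht.2)

lemma det_eq_zero_of_mem_rankLE {ι : Type*} [Fintype ι] [DecidableEq ι] {d t : ℕ}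
    {ψ : Module.Dual K (Hd K m d)} (hψ : ψ ∈ rankLE d t) (ht : t < Fintype.card ι)
    (G H : ι → PR K m) (hGH : ∀ i j, G i * H j ∈ Hd K m d) :
    (Matrix.of fun i j => ψ ⟨G i * H j, hGH i j⟩).det = 0 := by
  obtain ⟨c, hc, h⟩ := mem_rankLE_iff.mp hψ
  let A : Matrix ι c.support K := Matrix.of fun i Q => MvPolynomial.eval Q.1.rep (G i)
  let B : Matrix c.support ι K := Matrix.of fun Q j => c Q * MvPolynomial.eval Q.1.rep (H j)
  have hAB : Matrix.of (fun i j => ψ ⟨G i * H j, hGH i j⟩) = A * B := by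
    ext i j
    rw [Matrix.of_apply, h, pointSum_apply, Matrix.mul_apply, ← Finset.sum_coe_sort]
    refine Finset.sum_congr rfl fun Q _ => ?_
    simp only [A, B, Matrix.of_apply, map_mul]
    ring
  by_contra hdet
  have hrank := (Matrix.rank_mul_le_left A B).trans A.rank_le_card_width
  rw [← hAB, Matrix.rank_of_det_ne_zero hdet, Fintype.card_coe] at hrank
  omega

lemma det_mem_polyFunctions {ι : Type*} [Fintype ι] [DecidableEq ι] {V : Type} [AddCommGroup V]
    [Module K V] (φ : ι → ι → Module.Dual K V) :
    (fun x => (Matrix.of fun i j => φ i j x).det) ∈ polyFunctions K V := by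
  have hdet : (fun x => (Matrix.of fun i j => φ i j x).det) = ∑ τ : Equiv.Perm ι,
      (Equiv.Perm.sign τ : ℤ) • ∏ i, (φ (τ i) i : V → K) := by
    ext x
    simp [Matrix.det_apply, Units.smul_def]
  rw [hdet]
  exact Subalgebra.sum_mem _ fun τ _ => zsmul_mem
    (Subalgebra.prod_mem _ fun i _ => Algebra.subset_adjoin (Set.mem_ofPred.mpr ⟨φ (τ i) i, rfl⟩)) _

lemma card_le_of_mk_mem_secantWrt {ι : Type*} [Fintype ι] [DecidableEq ι] {d t : ℕ}
    {ψ : Module.Dual K (Hd K m d)} (hψ : ψ ≠ 0) {G H : ι → PR K m}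
    (hGH : ∀ i j, G i * H j ∈ Hd K m d)
    (hdet : (Matrix.of fun i j => ψ ⟨G i * H j, hGH i j⟩).det ≠ 0)
    (h : Projectivization.mk K ψ hψ ∈ secantWrt (XSet K m d) t) : Fintype.card ι ≤ t := by
  by_contra! ht
  refine hdet ?_
  have := (mk_mem_secantWrt_iff hψ).mp h _
    (det_mem_polyFunctions fun i j => Module.Dual.eval K _ ⟨G i * H j, hGH i j⟩)
    (fun χ hχ _ x => det_eq_zero_of_mem_rankLE (smul_mem_rankLE x hχ) ht G H hGH) 1
  rwa [one_smul] at this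

end Border

section Jet

open MvPolynomial

lemma exists_sum_mul_pow_eq_ite (K : Type*) [Field K] (N b : ℕ) [NeZero (N : K)]
    [HasEnoughRootsOfUnity K N] : ∃ w x : Fin N → K,
      ∀ l, ∑ j, w j * x j ^ l = if l ≡ b [MOD N] then 1 else 0 := by
  have hN : NeZero N := .of_neZero_natCast K
  obtain ⟨_, hζ⟩ := HasEnoughRootsOfUnity.exists_primitiveRoot K N
  obtain ⟨ζ, rfl⟩ := hζ.isUnit hN.out
  have hmod : ∀ l, (ζ ^ l / ζ ^ b : K) = 1 ↔ l ≡ b [MOD N] := fun l => by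
    rw [div_eq_one_iff_eq (pow_ne_zero b ζ.ne_zero),
      (IsPrimitiveRoot.coe_units_iff.mp hζ).eq_orderOf, ← pow_eq_pow_iff_modEq]
    norm_cast
  refine ⟨fun j => (N : K)⁻¹ * ((ζ ^ b : K) ^ (j : ℕ))⁻¹, fun j => ζ ^ (j : ℕ), fun l => ?_⟩
  have hgeom : ∑ j : Fin N, (N : K)⁻¹ * ((ζ ^ b : K) ^ (j : ℕ))⁻¹ * (ζ ^ (j : ℕ)) ^ l =
      (N : K)⁻¹ * ∑ j ∈ Finset.range N, (ζ ^ l / ζ ^ b : K) ^ j := by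
    rw [Finset.mul_sum, ← Fin.sum_univ_eq_sum_range fun j => (N : K)⁻¹ * (ζ ^ l / ζ ^ b : K) ^ j]
    refine Finset.sum_congr rfl fun j _ => ?_
    rw [div_pow, div_eq_mul_inv, ← pow_mul', pow_mul]
    ring
  rw [hgeom]
  split_ifs with h
  · simp [(hmod l).mpr h, NeZero.ne (N : K)]
  · rw [geom_sum_eq (mt (hmod l).mp h), div_pow, ← pow_mul', ← pow_mul', pow_mul, pow_mul,
      hζ.pow_eq_one]
    simp

variable {K : Type} [Field K] {m : ℕ}

/-- The functional taking the coefficient of `X ^ b` in the restriction of a form to the affine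
chart `linePoint i₀ i₁`: an element of the span of the degree-`b+1` scheme supported at the
coordinate point `i₀` on the rational normal curve image of the line. -/
def jet (d : ℕ) (i₀ i₁ : Fin (m + 1)) (b : ℕ) : Module.Dual K (Hd K m d) :=
  Polynomial.lcoeff K b ∘ₗ (lineRestrict i₀ i₁).toLinearMap ∘ₗ (Hd K m d).subtype

lemma jet_apply (d : ℕ) (i₀ i₁ : Fin (m + 1)) (b : ℕ) (f : Hd K m d) :
    jet d i₀ i₁ b f = (lineRestrict i₀ i₁ (f : PR K m)).coeff b := rfl

lemma nu_linePoint (d : ℕ) (i₀ i₁ : Fin (m + 1)) (t : K) :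
    nu d (linePoint i₀ i₁ t) = ∑ l ∈ Finset.range (d + 1), t ^ l • jet d i₀ i₁ l := by
  ext f
  rw [nu_apply, ← eval_lineRestrict, Polynomial.eval_eq_sum_range'
    (Nat.lt_succ_of_le (natDegree_lineRestrict_le i₀ i₁ f.2))]
  simp [LinearMap.sum_apply, jet_apply, mul_comm]

lemma exists_sum_smul_nu_linePoint_eq (d : ℕ) (i₀ i₁ : Fin (m + 1)) (N b : ℕ) [NeZero (N : K)]
    [HasEnoughRootsOfUnity K N] : ∃ w x : Fin N → K, ∀ t : K,
      ∑ j, w j • nu d (linePoint i₀ i₁ (t * x j)) =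
        ∑ l ∈ Finset.range (d + 1) with l ≡ b [MOD N], t ^ l • jet d i₀ i₁ l := by
  obtain ⟨w, x, hwx⟩ := exists_sum_mul_pow_eq_ite K N b
  refine ⟨w, x, fun t => ?_⟩
  simp only [nu_linePoint, Finset.smul_sum, smul_smul]
  rw [Finset.sum_comm, Finset.sum_filter]
  refine Finset.sum_congr rfl fun l _ => ?_
  rw [← Finset.sum_smul, Finset.sum_congr rfl fun j _ => show w j * (t * x j) ^ l =
    t ^ l * (w j * x j ^ l) by ring, ← Finset.mul_sum, hwx]
  split_ifs <;> simp

lemma jet_eq_sum_smul_nu {d b : ℕ} (hbd : 2 * b ≤ d) (i₀ i₁ : Fin (m + 1))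
    [NeZero ((d + 1 - b : ℕ) : K)] [HasEnoughRootsOfUnity K (d + 1 - b)] :
    ∃ w x : Fin (d + 1 - b) → K, jet d i₀ i₁ b = ∑ j, w j • nu d (linePoint i₀ i₁ (x j)) := by
  obtain ⟨w, x, hwx⟩ := exists_sum_smul_nu_linePoint_eq (K := K) d i₀ i₁ (d + 1 - b) b
  refine ⟨w, x, ?_⟩
  have hfilter : (Finset.range (d + 1)).filter (· ≡ b [MOD d + 1 - b]) = {b} := by
    ext l
    simp only [Finset.mem_filter, Finset.mem_range, Finset.mem_singleton]
    constructor
    · rintro ⟨hl, hmod⟩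
      have := hmod.le_of_lt_add (by omega)
      exact hmod.eq_of_lt_of_lt (by omega) (by omega)
    · rintro rfl
      exact ⟨by omega, rfl⟩
  simpa [hfilter] using (hwx 1).symm

lemma exists_isPolynomialCurve_jet {d b : ℕ} (hbd : b ≤ d) (i₀ i₁ : Fin (m + 1))
    [NeZero ((b + 1 : ℕ) : K)] [HasEnoughRootsOfUnity K (b + 1)] :
    ∃ γ : K → Module.Dual K (Hd K m d), IsPolynomialCurve γ ∧ γ 0 = jet d i₀ i₁ b ∧
      ∀ t ≠ 0, ∃ w x : Fin (b + 1) → K, γ t = ∑ j, w j • nu d (linePoint i₀ i₁ (x j)) := by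
  let L : Finset ℕ := {l ∈ Finset.range (d + 1) | l ≡ b [MOD b + 1]}
  have hL : ∀ l ∈ L, b ≤ l := fun l hl => by
    have hmod := (Finset.mem_filter.mp hl).2
    rw [Nat.ModEq, Nat.mod_eq_of_lt b.lt_succ_self] at hmod
    exact hmod ▸ Nat.mod_le l _
  have hbL : b ∈ L := Finset.mem_filter.mpr ⟨Finset.mem_range.mpr (by omega), rfl⟩
  obtain ⟨w, x, hwx⟩ := exists_sum_smul_nu_linePoint_eq (K := K) d i₀ i₁ (b + 1) b
  refine ⟨fun t => ∑ l ∈ L, t ^ (l - b) • jet d i₀ i₁ l, isPolynomialCurve_sum_pow_smul L _ _, ?_,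
    fun t ht => ⟨fun j => (t ^ b)⁻¹ * w j, fun j => t * x j, ?_⟩⟩
  · beta_reduce
    rw [Finset.sum_eq_single_of_mem b hbL, Nat.sub_self, pow_zero, one_smul]
    intro l hl hne
    have := hL l hl
    rw [zero_pow (by omega), zero_smul]
  · simp only [mul_smul, ← Finset.smul_sum]
    rw [hwx, Finset.smul_sum]
    refine Finset.sum_congr rfl fun l hl => ?_
    rw [smul_smul, pow_sub₀ t ht (hL l hl), mul_comm]

/-- The element of `σ_{s,r}` for `s = b + 1 + #ι` and `r = d + 1 - b + #ι`: the functional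
`jet d (e 0) (e 1) b` plus the evaluations at the points with parameters `y i` of the line joining
the coordinate points `e 2` and `e 1`. -/
def jetPlusPoints {ι : Type*} [Fintype ι] (d : ℕ) (e : Fin 3 → Fin (m + 1)) (b : ℕ) (y : ι → K) :
    Module.Dual K (Hd K m d) :=
  jet d (e 0) (e 1) b + ∑ i, nu d (linePoint (e 2) (e 1) (y i))

variable {ι : Type*} [Fintype ι]

lemma sum_smul_nu_add_sum_nu_mem_rankLE {κ : Type*} [Fintype κ] (d : ℕ) (w : κ → K)
    (v : κ → Fin (m + 1) → K) (v' : ι → Fin (m + 1) → K) :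
    ∑ j, w j • nu d (v j) + ∑ i, nu d (v' i) ∈ rankLE d (Fintype.card κ + Fintype.card ι) := by
  simpa using sum_smul_nu_mem_rankLE d (Sum.elim w fun _ : ι => 1) (Sum.elim v v')

lemma jetPlusPoints_mem_rankLE {d b : ℕ} (hbd : 2 * b ≤ d) (e : Fin 3 → Fin (m + 1)) (y : ι → K)
    [NeZero ((d + 1 - b : ℕ) : K)] [HasEnoughRootsOfUnity K (d + 1 - b)] :
    jetPlusPoints d e b y ∈ rankLE d (d + 1 - b + Fintype.card ι) := by
  obtain ⟨w, x, hwx⟩ := jet_eq_sum_smul_nu (K := K) hbd (e 0) (e 1)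
  rw [jetPlusPoints, hwx]
  simpa only [Fintype.card_fin] using sum_smul_nu_add_sum_nu_mem_rankLE d w _ _

lemma mk_jetPlusPoints_mem_secantWrt [Infinite K] {d b : ℕ} (hbd : b ≤ d)
    (e : Fin 3 → Fin (m + 1)) (y : ι → K) [NeZero ((b + 1 : ℕ) : K)]
    [HasEnoughRootsOfUnity K (b + 1)] (h₀ : jetPlusPoints d e b y ≠ 0) :
    Projectivization.mk K (jetPlusPoints d e b y) h₀ ∈
      secantWrt (XSet K m d) (b + 1 + Fintype.card ι) := by
  obtain ⟨γ, hγ, hγ₀, hγw⟩ := exists_isPolynomialCurve_jet hbd (e 0) (e 1) (K := K)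
  have hzero : jetPlusPoints d e b y = γ 0 + ∑ i, nu d (linePoint (e 2) (e 1) (y i)) := by
    rw [hγ₀, jetPlusPoints]
  revert h₀
  rw [hzero]
  refine fun h₀ => mk_mem_secantWrt_of_isPolynomialCurve (hγ.add_const _) h₀ fun t ht => ?_
  obtain ⟨w, x, hwx⟩ := hγw t ht
  simpa only [hwx, Fintype.card_fin] using sum_smul_nu_add_sum_nu_mem_rankLE d w _ _

end Jet

section RankLowerBound

open MvPolynomial

lemma linePoint_comp {R σ τ : Type*} [CommSemiring R] [DecidableEq σ] [DecidableEq τ] {e : τ → σ}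
    (he : Function.Injective e) (i₀ i₁ : τ) (t : R) :
    linePoint (e i₀) (e i₁) t ∘ e = linePoint i₀ i₁ t := by
  ext i
  simp [linePoint, Pi.single_apply, he.eq_iff]

lemma lineRestrict_rename {K σ τ : Type*} [Field K] [DecidableEq σ] [DecidableEq τ] {e : τ → σ}
    (he : Function.Injective e) (i₀ i₁ : τ) (f : MvPolynomial τ K) :
    lineRestrict (e i₀) (e i₁) (rename e f) = lineRestrict i₀ i₁ f := by
  rw [lineRestrict, aeval_rename, linePoint_comp he, lineRestrict]

variable {K : Type} [Field K] {m : ℕ} {ι : Type*} [Fintype ι]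

lemma jetPlusPoints_rename {d : ℕ} {e : Fin 3 → Fin (m + 1)} (he : Function.Injective e) (b : ℕ)
    (y : ι → K) {f : MvPolynomial (Fin 3) K} (hf : f.IsHomogeneous d) :
    jetPlusPoints d e b y ⟨rename e f, hf.rename_isHomogeneous⟩ =
      (lineRestrict 0 1 f).coeff b + ∑ i, eval (linePoint 2 1 (y i)) f := by
  simp [jetPlusPoints, LinearMap.sum_apply, nu_apply, jet_apply, lineRestrict_rename he,
    eval_rename, linePoint_comp he]

lemma linePoint_ne_zero {σ : Type*} [DecidableEq σ] {i₀ i₁ : σ} (h : i₀ ≠ i₁) (t : K) :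
    linePoint i₀ i₁ t ≠ 0 := fun h₀ => by
  simpa [linePoint, h] using congrFun h₀ i₀

lemma mk_linePoint_injective {σ : Type*} [DecidableEq σ] {i₀ i₁ : σ} (h : i₀ ≠ i₁) :
    Function.Injective fun t : K => Projectivization.mk K _ (linePoint_ne_zero h t) :=
  fun t t' htt' => by
    obtain ⟨x, hx⟩ := (Projectivization.mk_eq_mk_iff' K _ _ _ _).mp htt'
    have h₀ := congrFun hx i₀
    have h₁ := congrFun hx i₁
    simp only [linePoint, Pi.smul_apply, Pi.add_apply, Pi.single_eq_same, ne_eq, h,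
      not_false_eq_true, Pi.single_eq_of_ne, add_zero, smul_eq_mul, mul_one, h.symm, zero_add]
      at h₀ h₁
    rw [← h₁, h₀, one_mul]

lemma exists_pointSum_eq_sum_linePoint {y : ι → K} (hy : Function.Injective y) (d : ℕ) :
    ∃ β : ℙ K (Fin 3 → K) →₀ K, β.support.card = Fintype.card ι ∧
      (∀ Q ∈ β.support, Q.rep 2 ≠ 0) ∧ ∀ f : MvPolynomial (Fin 3) K, f.IsHomogeneous d →
        pointSum β f = ∑ i, eval (linePoint 2 1 (y i)) f := by
  have h₂₁ : (2 : Fin 3) ≠ 1 := by decide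
  obtain ⟨β, hcard, hβ, hsum⟩ := exists_pointSum_eq_sum_of_injective d
    (fun _ : ι => one_ne_zero (α := K)) (fun i => linePoint_ne_zero h₂₁ (y i))
    ((mk_linePoint_injective h₂₁).comp hy)
  refine ⟨β, hcard, fun Q hQ => ?_, fun f hf => by simpa using hsum f hf⟩
  obtain ⟨i, rfl⟩ := hβ Q hQ
  obtain ⟨u, hu⟩ := Projectivization.exists_smul_eq_mk_rep K _ (linePoint_ne_zero h₂₁ (y i))
  rw [← hu]
  simp [linePoint, Units.smul_def]

lemma le_of_jetPlusPoints_mem_rankLE {d b t : ℕ} (hb : 1 ≤ b) (hbd : b < d)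
    {e : Fin 3 → Fin (m + 1)} (he : Function.Injective e) {y : ι → K} (hy : Function.Injective y)
    (hι : 2 * Fintype.card ι ≤ d) (h : jetPlusPoints d e b y ∈ rankLE d t) :
    d + 1 + Fintype.card ι ≤ t + b := by
  obtain ⟨c, hc, hsum⟩ := mem_rankLE_iff.mp h
  obtain ⟨β, hβcard, hβ₂, hβ⟩ := exists_pointSum_eq_sum_linePoint hy d
  obtain ⟨α, hαcard, hα⟩ := exists_pointSum_eq_sum d (fun Q : c.support => c Q)
    fun Q => Q.1.rep ∘ e
  have hjet := le_card_support_of_jet_add_pointSum_eq hb hbd (hβcard.symm ▸ hι) hβ₂ (α := α)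
    fun f hf => by
      rw [hα f hf, hβ f hf, ← jetPlusPoints_rename he b y hf, hsum, pointSum_apply,
        ← Finset.sum_coe_sort]
      simp only [eval_rename]
  rw [Fintype.card_coe] at hαcard
  omega

end RankLowerBound

section BorderLowerBound

open MvPolynomial

section TestForm

variable {K σ ι : Type*} [Field K] [Fintype ι] [DecidableEq ι] {e : Fin 3 → σ}
  {y : ι → K} {n b : ℕ}

/-- The degree-`n` forms for which the catalecticant minor of `jetPlusPoints d e b y` is diagonal:
monomials on the line through `e 0` and `e 1`, and for each `i : ι` a form vanishing on that line
and at all points with parameters `y q` on the line through `e 2` and `e 1` except the `i`-th.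
The jet pairs the monomials in a Hankel block, so the columns use them in reversed order. -/
def testForm (e : Fin 3 → σ) (y : ι → K) (n b : ℕ) : Fin (b + 1) ⊕ ι → MvPolynomial σ K :=
  Sum.elim (fun j => X (e 0) ^ (n - j) * X (e 1) ^ (j : ℕ)) fun i =>
    X (e 2) ^ (n + 1 - Fintype.card ι) *
      ∏ q ∈ Finset.univ.erase i, (X (e 1) - C (y q) * X (e 2))

lemma isHomogeneous_testForm (hn : b + Fintype.card ι ≤ n) (i : Fin (b + 1) ⊕ ι) :
    (testForm e y n b i).IsHomogeneous n := by
  rcases i with j | i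
  · have h := (isHomogeneous_X_pow (R := K) (e 0) (n - j)).mul (isHomogeneous_X_pow (e 1) j)
    rwa [Nat.sub_add_cancel (by omega)] at h
  · have hprod := IsHomogeneous.prod (Finset.univ.erase i)
      (fun q => X (e 1) - C (y q) * X (e 2)) (fun _ => 1)
      fun q _ => (isHomogeneous_X K (e 1)).sub (isHomogeneous_C_mul_X (y q) (e 2))
    have h := (isHomogeneous_X_pow (R := K) (e 2) (n + 1 - Fintype.card ι)).mul hprod
    have hι : 0 < Fintype.card ι := Fintype.card_pos_iff.mpr ⟨i⟩
    rw [Finset.sum_const, smul_eq_mul, mul_one, Finset.card_erase_of_mem (Finset.mem_univ i),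
      Finset.card_univ, show n + 1 - Fintype.card ι + (Fintype.card ι - 1) = n by omega] at h
    exact h

variable [DecidableEq σ]

lemma lineRestrict_testForm_inl (he : Function.Injective e) (j : Fin (b + 1)) :
    lineRestrict (e 0) (e 1) (testForm e y n b (Sum.inl j)) = Polynomial.X ^ (j : ℕ) := by
  simp [testForm, lineRestrict_X, linePoint, he.eq_iff]

lemma lineRestrict_testForm_inr (he : Function.Injective e) (hn : Fintype.card ι ≤ n) (i : ι) :
    lineRestrict (e 0) (e 1) (testForm e y n b (Sum.inr i)) = 0 := by
  have : n + 1 - Fintype.card ι ≠ 0 := by omega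
  simp [testForm, lineRestrict_X, linePoint, he.eq_iff, this]

lemma eval_linePoint_testForm_inl (he : Function.Injective e) (hn : b < n) (j : Fin (b + 1))
    (t : K) : eval (linePoint (e 2) (e 1) t) (testForm e y n b (Sum.inl j)) = 0 := by
  have : n - j ≠ 0 := by omega
  simp [testForm, linePoint, he.eq_iff, this]

lemma eval_linePoint_testForm_inr (he : Function.Injective e) (i : ι) (t : K) :
    eval (linePoint (e 2) (e 1) t) (testForm e y n b (Sum.inr i)) =
      ∏ q ∈ Finset.univ.erase i, (t - y q) := by
  simp [testForm, linePoint, he.eq_iff, map_prod]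

end TestForm

variable {K : Type} [Field K] {m d b : ℕ} {ι : Type*} [Fintype ι] {e : Fin 3 → Fin (m + 1)}
  {y : ι → K}

lemma jetPlusPoints_mul {G H : PR K m} (hGH : G * H ∈ Hd K m d) :
    jetPlusPoints d e b y ⟨G * H, hGH⟩ =
      (lineRestrict (e 0) (e 1) G * lineRestrict (e 0) (e 1) H).coeff b +
        ∑ i, eval (linePoint (e 2) (e 1) (y i)) G * eval (linePoint (e 2) (e 1) (y i)) H := by
  simp [jetPlusPoints, LinearMap.sum_apply, jet_apply, nu_apply]

lemma jetPlusPoints_testForm_mul_testForm [DecidableEq ι] (he : Function.Injective e) {n n' : ℕ}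
    (hn : b + Fintype.card ι ≤ n) (hn' : b + Fintype.card ι ≤ n') (i j : Fin (b + 1) ⊕ ι)
    (hij : testForm e y n b i * testForm e y n' b (j.map Fin.rev id) ∈ Hd K m d) :
    jetPlusPoints d e b y ⟨testForm e y n b i * testForm e y n' b (j.map Fin.rev id), hij⟩ =
      Matrix.diagonal (Sum.elim (fun _ => 1) fun i => (∏ q ∈ Finset.univ.erase i, (y i - y q)) ^ 2)
        i j := by
  have hι (i : ι) : 0 < Fintype.card ι := Fintype.card_pos_iff.mpr ⟨i⟩
  rw [jetPlusPoints_mul, Matrix.diagonal_apply]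
  rcases i with p | i <;> rcases j with p' | j <;> simp only [Sum.map_inl, Sum.map_inr, id]
  · rw [lineRestrict_testForm_inl he, lineRestrict_testForm_inl he, Finset.sum_eq_zero fun i _ => by
      rw [eval_linePoint_testForm_inl he (by have := hι i; omega), zero_mul], ← pow_add,
      Polynomial.coeff_X_pow, add_zero, Fin.val_rev]
    refine if_congr ?_ rfl rfl
    rw [Sum.inl.injEq, Fin.ext_iff]
    omega
  · rw [lineRestrict_testForm_inr he (by omega), mul_zero, Polynomial.coeff_zero, zero_add,
      if_neg Sum.inl_ne_inr, Finset.sum_eq_zero fun i _ => by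
      rw [eval_linePoint_testForm_inl he (by have := hι i; omega), zero_mul]]
  · rw [lineRestrict_testForm_inr he (by omega), zero_mul, Polynomial.coeff_zero, zero_add,
      if_neg Sum.inr_ne_inl, Finset.sum_eq_zero fun i _ => by
      rw [eval_linePoint_testForm_inl he (by have := hι i; omega), mul_zero]]
  · have hprod {i q : ι} (h : i ≠ q) : ∏ q ∈ Finset.univ.erase q, (y i - y q) = 0 :=
      Finset.prod_eq_zero (Finset.mem_erase.mpr ⟨h, Finset.mem_univ i⟩) (sub_self _)
    simp only [lineRestrict_testForm_inr he (show Fintype.card ι ≤ n by omega), zero_mul,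
      Polynomial.coeff_zero, zero_add, eval_linePoint_testForm_inr he, Sum.inr.injEq]
    rw [Finset.sum_eq_single_of_mem i (Finset.mem_univ i) fun l _ hl => by
      rw [hprod hl, zero_mul]]
    split_ifs with h
    · rw [← h, Sum.elim_inr, sq]
    · rw [hprod h, mul_zero]

lemma card_le_of_mk_jetPlusPoints_mem_secantWrt (he : Function.Injective e)
    (hy : Function.Injective y) (hd : 2 * (b + Fintype.card ι) ≤ d) {t : ℕ}
    (h₀ : jetPlusPoints d e b y ≠ 0)
    (h : Projectivization.mk K (jetPlusPoints d e b y) h₀ ∈ secantWrt (XSet K m d) t) :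
    b + 1 + Fintype.card ι ≤ t := by
  classical
  let n := b + Fintype.card ι
  have hn : n ≤ d - n := by omega
  have hGH : ∀ i j, testForm e y n b i * testForm e y (d - n) b (Sum.map Fin.rev id j) ∈
      Hd K m d := fun i j => by
    have := (isHomogeneous_testForm (e := e) (y := y) le_rfl i).mul
      (isHomogeneous_testForm (e := e) (y := y) hn (j.map Fin.rev id))
    rwa [Nat.add_sub_cancel' (by omega)] at this
  have hcard := card_le_of_mk_mem_secantWrt h₀ hGH ?_ h
  · simpa using hcard
  rw [show (Matrix.of fun i j => jetPlusPoints d e b y ⟨_, hGH i j⟩) = Matrix.diagonal _ from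
    Matrix.ext fun i j => jetPlusPoints_testForm_mul_testForm he le_rfl hn i j (hGH i j),
    Matrix.det_diagonal, Finset.prod_ne_zero_iff]
  rintro (p | i) -
  · exact one_ne_zero
  · refine pow_ne_zero 2 (Finset.prod_ne_zero_iff.mpr fun q hq => sub_ne_zero.mpr fun hiq => ?_)
    exact Finset.ne_of_mem_erase hq (hy hiq).symm

end BorderLowerBound

section SigmaSet

variable {K : Type} [Field K] {m d b : ℕ} {ι : Type*} [Fintype ι] {e : Fin 3 → Fin (m + 1)}
  {y : ι → K}

lemma jetPlusPoints_ne_zero (hb : 1 ≤ b) (hd : 2 * (b + Fintype.card ι) ≤ d)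
    (he : Function.Injective e) (hy : Function.Injective y) :
    jetPlusPoints d e b y ≠ 0 := fun h => by
  have hzero : jetPlusPoints d e b y ∈ rankLE d 0 := mem_rankLE_iff.mpr ⟨0, by simp [h]⟩
  have := le_of_jetPlusPoints_mem_rankLE hb (by omega) he hy (by omega) hzero
  omega

theorem mk_jetPlusPoints_mem_sigmaSet [Infinite K] (hb : 1 ≤ b)
    (hd : 2 * (b + Fintype.card ι) ≤ d) [NeZero ((b + 1 : ℕ) : K)]
    [HasEnoughRootsOfUnity K (b + 1)] [NeZero ((d + 1 - b : ℕ) : K)]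
    [HasEnoughRootsOfUnity K (d + 1 - b)] (he : Function.Injective e) (hy : Function.Injective y)
    (h₀ : jetPlusPoints d e b y ≠ 0) :
    Projectivization.mk K (jetPlusPoints d e b y) h₀ ∈
      sigmaSet K m d (b + 1 + Fintype.card ι) (d + 1 - b + Fintype.card ι) := by
  refine ⟨brank_mk_eq h₀ (by omega) (mk_jetPlusPoints_mem_secantWrt (by omega) e y h₀)
    fun t => card_le_of_mk_jetPlusPoints_mem_secantWrt he hy hd h₀,
    srank_mk_eq h₀ (jetPlusPoints_mem_rankLE (by omega) e y) fun t ht => ?_⟩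
  have := le_of_jetPlusPoints_mem_rankLE hb (by omega) he hy (by omega) ht
  omega

end SigmaSet

theorem stmt14_general (K : Type) [Field K] [CharZero K] (m s d : ℕ)
    (hK : ∀ n : ℕ, n ≠ 0 → HasEnoughRootsOfUnity K n) (hm : 2 ≤ m) (hd : 2 * s ≤ d + 2) :
    ∀ r : ℕ, d + 2 ≤ r + s → r + 2 ≤ d + s → (r + s) % 2 = d % 2 →
      (sigmaSet K m d s r).Nonempty := by
  intro r hr hr' hpar
  obtain ⟨k, hk⟩ : ∃ k, r + s = d + 2 + 2 * k := ⟨(r + s - d - 2) / 2, by omega⟩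
  obtain ⟨b, rfl⟩ : ∃ b, s = b + 1 + k := ⟨s - k - 1, by omega⟩
  obtain rfl : r = d + 1 - b + k := by omega
  have hbk : 2 * (b + Fintype.card (Fin k)) ≤ d := by rw [Fintype.card_fin]; omega
  have hb₀ : b + 1 ≠ 0 := by omega
  have hdb₀ : d + 1 - b ≠ 0 := by omega
  have := hK _ hb₀
  have := hK _ hdb₀
  have : NeZero ((b + 1 : ℕ) : K) := ⟨Nat.cast_ne_zero.mpr hb₀⟩
  have : NeZero ((d + 1 - b : ℕ) : K) := ⟨Nat.cast_ne_zero.mpr hdb₀⟩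
  have he : Function.Injective (Fin.castLE (by omega) : Fin 3 → Fin (m + 1)) :=
    Fin.castLE_injective _
  have hy : Function.Injective fun i : Fin k => ((i : ℕ) : K) :=
    Nat.cast_injective.comp Fin.val_injective
  have hmem := mk_jetPlusPoints_mem_sigmaSet (by omega) hbk he hy
    (jetPlusPoints_ne_zero (by omega) hbk he hy)
  rw [Fintype.card_fin] at hmem
  exact ⟨_, hmem⟩

end

/-- Step (a) of the proof of the main theorem: nonemptiness of `σ_{s,r}(X_{m,d})` for
`d+2-s ≤ r ≤ d+s-2` with `r + s ≡ d (mod 2)`. -/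
theorem stmt14 (K : Type) [Field K] [IsAlgClosed K] [CharZero K]
    (m s d : ℕ) (hm : 2 ≤ m) (hs : 4 ≤ s) (hd : 2 * s + 2 ≤ d) :
    ∀ r : ℕ, d + 2 ≤ r + s → r + 2 ≤ d + s → (r + s) % 2 = d % 2 →
      (sigmaSet K m d s r).Nonempty :=
  stmt14_general K m s d
    (fun n hn => have : NeZero (n : K) := ⟨Nat.cast_ne_zero.mpr hn⟩; inferInstance) hm (by omega)
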